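/- arXiv:math/9907207 — 2 statements merged into one kernel-verified Lean document; each statement's English description precedes it below -/
import Mathlib

section
/- Let R be a ring and n a natural number. Let K and L be cochain double complexes of R-modules (with differentials of degree +1 in both directions) such that K^{p,q} = 0 and L^{p,q} = 0 whenever p < 0 or p > n, and let φ : K → L be a morphism of double complexes. If for every p and every q the map induced by φ on the vertical cohomology of the p-th columns, H^q(K^{p,•}) → H^q(L^{p,•}), is an isomorphism, then the induced morphism of total complexes Tot(K) → Tot(L) is a quasi-isomorphism, i.e. induces an isomorphism on cohomology in every degree. -/
open CategoryTheory Limits HomologicalComplex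

/-!
Filter `Tot K` and `Tot L` by the subcomplexes made of the columns of index at least `p`. Modulo the
columns of index greater than `p`, a cocycle of the mapping cone of `Tot φ` in the `p`-th filtration
step is, up to the sign `(-1)^p`, a cocycle of the mapping cone of the quasi-isomorphism
`φ.f p`, hence a boundary there; subtracting this boundary pushes the cocycle into the next
filtration step. In a given degree the filtration is finite, so that after finitely many corrections
nothing is left: the cone of `Tot φ` is acyclic. Elements are morphisms from a variable object, and
may be refined along epimorphisms.
-/

universe v u w

section MappingCone

variable {C : Type u} [Category.{v} C] {ι : Type w} {c : ComplexShape ι}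

section Preadditive

variable [Preadditive C] {K L : HomologicalComplex C c}

/-- `(x, y)` is a cocycle of the mapping cone of `φ`, as a generalized element over `A`. The sign of
`y` is chosen so that the condition reads `φ x = d y`. -/
structure IsConeCocycle (φ : K ⟶ L) {j k : ι} {A : C} (x : A ⟶ K.X k) (y : A ⟶ L.X j) : Prop where
  comp_d (l : ι) : x ≫ K.d k l = 0
  comp_map : x ≫ φ.f k = y ≫ L.d j k

/-- After refinement along an epimorphism, `(x, y)` is a coboundary of the mapping cone of `φ`, with
the sign convention of `IsConeCocycle`; `i` is the index of the second component of a primitive. -/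
def IsConeBoundaryUpToRefinement (φ : K ⟶ L) (i : ι) {j k : ι} {A : C}
    (x : A ⟶ K.X k) (y : A ⟶ L.X j) : Prop :=
  ∃ (A' : C) (π : A' ⟶ A) (_ : Epi π) (x' : A' ⟶ K.X j) (y' : A' ⟶ L.X i),
    π ≫ x = x' ≫ K.d j k ∧ π ≫ y = x' ≫ φ.f j + y' ≫ L.d i j

variable {φ : K ⟶ L} {i j k : ι} {A A' : C} {x : A ⟶ K.X k} {y : A ⟶ L.X j}

lemma IsConeCocycle.comp_sub_boundary (h : IsConeCocycle φ x y) (π : A' ⟶ A)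
    (x' : A' ⟶ K.X j) (y' : A' ⟶ L.X i) :
    IsConeCocycle φ (π ≫ x - x' ≫ K.d j k) (π ≫ y - (x' ≫ φ.f j + y' ≫ L.d i j)) where
  comp_d l := by simp [h.comp_d]
  comp_map := by simp [h.comp_map]

lemma IsConeBoundaryUpToRefinement.of_comp_sub_boundary (π : A' ⟶ A) [Epi π]
    (x' : A' ⟶ K.X j) (y' : A' ⟶ L.X i)
    (h : IsConeBoundaryUpToRefinement φ i
      (π ≫ x - x' ≫ K.d j k) (π ≫ y - (x' ≫ φ.f j + y' ≫ L.d i j))) :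
    IsConeBoundaryUpToRefinement φ i x y := by
  obtain ⟨A'', ρ, _, x'', y'', hx, hy⟩ := h
  rw [Preadditive.comp_sub, sub_eq_iff_eq_add] at hx hy
  refine ⟨A'', ρ ≫ π, inferInstance, x'' + ρ ≫ x', y'' + ρ ≫ y', ?_, ?_⟩
  · simp [hx]
  · simp only [Category.assoc, hy, Preadditive.comp_add, Preadditive.add_comp]
    abel

end Preadditive

variable [Abelian C]

lemma IsConeCocycle.isConeBoundaryUpToRefinement {K L : HomologicalComplex C c} {φ : K ⟶ L}
    {i j k : ι} (hij : c.Rel i j) (hjk : c.Rel j k)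
    [Epi (homologyMap φ j)] [Mono (homologyMap φ k)] {A : C} {x : A ⟶ K.X k} {y : A ⟶ L.X j}
    (h : IsConeCocycle φ x y) : IsConeBoundaryUpToRefinement φ i x y := by
  obtain ⟨A₁, π₁, _, x₁, hx₁⟩ :=
    (mono_homologyMap_iff_up_to_refinements φ j k _ (c.prev_eq' hjk) rfl).1 inferInstance
      x (h.comp_d _) y h.comp_map
  have cocycle : (π₁ ≫ y - x₁ ≫ φ.f j) ≫ L.d j k = 0 := by
    simp [← h.comp_map, reassoc_of% hx₁]
  obtain ⟨A₂, π₂, _, x₂, hx₂, y₂, hy₂⟩ :=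
    (epi_homologyMap_iff_up_to_refinements φ i j k (c.prev_eq' hij) (c.next_eq' hjk)).1
      inferInstance _ cocycle
  refine .of_comp_sub_boundary π₁ x₁ (0 : A₁ ⟶ L.X i) ⟨A₂, π₂, inferInstance, x₂, y₂, ?_, ?_⟩
  · simp [hx₁, hx₂]
  · simpa using hy₂

lemma quasiIso_of_isConeBoundaryUpToRefinement {K L : CochainComplex C ℤ} (φ : K ⟶ L)
    (h : ∀ (i j k : ℤ), i + 1 = j → j + 1 = k → ∀ ⦃A : C⦄ (x : A ⟶ K.X k) (y : A ⟶ L.X j),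
      IsConeCocycle φ x y → IsConeBoundaryUpToRefinement φ i x y) :
    QuasiIso φ := by
  rw [quasiIso_iff]
  intro m
  rw [quasiIsoAt_iff_isIso_homologyMap]
  have : Mono (homologyMap φ m) := by
    rw [mono_homologyMap_iff_up_to_refinements φ (m - 1) m (m + 1) (by simp) (by simp)]
    intro A x hx y hxy
    have cocycle : IsConeCocycle φ x y := ⟨fun l => by
      by_cases hl : m + 1 = l
      · rwa [← hl]
      · rw [K.shape _ _ hl, comp_zero], hxy⟩
    obtain ⟨A', π, hπ, x', -, hx', -⟩ := h (m - 2) (m - 1) m (by lia) (by lia) x y cocycle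
    exact ⟨A', π, hπ, x', hx'⟩
  have : Epi (homologyMap φ m) := by
    rw [epi_homologyMap_iff_up_to_refinements φ (m - 1) m (m + 1) (by simp) (by simp)]
    intro A y hy
    obtain ⟨A', π, hπ, x', y', hx', hy'⟩ := h (m - 1) m (m + 1) (by lia) rfl 0 y
      ⟨fun _ => zero_comp, by rw [zero_comp, hy]⟩
    exact ⟨A', π, hπ, x', by rw [← hx', comp_zero], y', hy'⟩
  exact isIso_of_mono_of_epi _

end MappingCone

/-- Double complexes with both differentials of degree `+1`. The `p`-th column of `K` is `K.X p`. -/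
abbrev DoubleComplex (C : Type u) [Category.{v} C] [HasZeroMorphisms C] :=
  HomologicalComplex₂ C (ComplexShape.up ℤ) (ComplexShape.up ℤ)

namespace DoubleComplex

variable {C : Type u} [Category.{v} C]

/-- Each antidiagonal `p + q = m` of `K` has only finitely many nonzero entries. -/
def HasFiniteDiagonals [HasZeroMorphisms C] (K : DoubleComplex C) : Prop :=
  ∀ m : ℤ, {p : ℤ | ¬ IsZero ((K.X p).X (m - p))}.Finite

lemma hasFiniteDiagonals_of_isZero [HasZeroMorphisms C] {K : DoubleComplex C} (a b : ℤ)
    (hK : ∀ p q : ℤ, p < a ∨ b < p → IsZero ((K.X p).X q)) : K.HasFiniteDiagonals := by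
  intro m
  refine (Set.finite_Icc a b).subset fun p hp => ?_
  by_contra hpab
  exact hp (hK p _ (by simp only [Set.mem_Icc] at hpab; lia))

section Preadditive

variable [Preadditive C] (K : DoubleComplex C) {L : DoubleComplex C}
  [K.HasTotal (.up ℤ)] [L.HasTotal (.up ℤ)] (φ : K ⟶ L)

/-- The projection of the total complex in degree `m` onto its summand `K^{p,q}`. -/
noncomputable def πTotal (p q m : ℤ) (h : p + q = m) :
    (K.total (.up ℤ)).X m ⟶ (K.X p).X q :=
  K.totalDesc fun a b (hab : a + b = m) =>
    if hap : a = p then (K.XXIsoOfEq _ _ _ hap (by lia)).hom else 0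

lemma ιTotal_πTotal_self (p q m : ℤ) (h : p + q = m) :
    K.ιTotal (.up ℤ) p q m h ≫ K.πTotal p q m h = 𝟙 _ := by
  simp [πTotal]

lemma ιTotal_πTotal_of_ne {p p' : ℤ} (hp : p ≠ p') (q q' m : ℤ) (h : p + q = m)
    (h' : p' + q' = m) :
    K.ιTotal (.up ℤ) p q m h ≫ K.πTotal p' q' m h' = 0 := by
  simp [πTotal, hp]

lemma ιTotal_d {p p' q q' m m' : ℤ} (hp : p + 1 = p') (hq : q + 1 = q') (hm : m + 1 = m')
    (h : p + q = m) :
    K.ιTotal (.up ℤ) p q m h ≫ (K.total (.up ℤ)).d m m' =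
      (K.d p p').f q ≫ K.ιTotal (.up ℤ) p' q m' (show p' + q = m' by lia) +
        p.negOnePow • ((K.X p).d q q' ≫ K.ιTotal (.up ℤ) p q' m' (show p + q' = m' by lia)) := by
  rw [HomologicalComplex₂.total_d, Preadditive.comp_add, HomologicalComplex₂.ι_D₁,
    HomologicalComplex₂.ι_D₂, K.d₁_eq (.up ℤ) hp q m' (show p' + q = m' by lia),
    K.d₂_eq (.up ℤ) p hq m' (show p + q' = m' by lia)]
  simp

lemma d_πTotal {p₀ p q q' m m' : ℤ} (hp : p₀ + 1 = p) (hq : q + 1 = q') (hm : m + 1 = m')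
    (h : p + q' = m') :
    (K.total (.up ℤ)).d m m' ≫ K.πTotal p q' m' h =
      K.πTotal p₀ q' m (by lia) ≫ (K.d p₀ p).f q' +
        p.negOnePow • (K.πTotal p q m (by lia) ≫ (K.X p).d q q') := by
  ext a b hab
  replace hab : a + b = m := hab
  rw [reassoc_of% K.ιTotal_d rfl rfl hm hab]
  simp only [Preadditive.add_comp, Preadditive.comp_add, Linear.units_smul_comp,
    Linear.comp_units_smul, Category.assoc]
  congr 1
  · by_cases hap : a = p₀
    · obtain rfl := hap
      obtain rfl := hp
      obtain rfl : b = q' := by lia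
      rw [ιTotal_πTotal_self, reassoc_of% K.ιTotal_πTotal_self, Category.comp_id]
    · rw [ιTotal_πTotal_of_ne _ (by lia), reassoc_of% K.ιTotal_πTotal_of_ne hap]
      simp
  · by_cases hap : a = p
    · obtain rfl := hap
      obtain rfl : b = q := by lia
      obtain rfl := hq
      rw [ιTotal_πTotal_self, reassoc_of% K.ιTotal_πTotal_self, Category.comp_id]
    · rw [ιTotal_πTotal_of_ne _ hap, reassoc_of% K.ιTotal_πTotal_of_ne hap]
      simp

variable {K} in
lemma map_πTotal (p q m : ℤ) (h : p + q = m) :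
    (HomologicalComplex₂.total.map φ (.up ℤ)).f m ≫ L.πTotal p q m h =
      K.πTotal p q m h ≫ (φ.f p).f q := by
  ext a b hab
  replace hab : a + b = m := hab
  rw [HomologicalComplex₂.ιTotal_map_assoc]
  by_cases hap : a = p
  · obtain rfl := hap
    obtain rfl : b = q := by lia
    rw [ιTotal_πTotal_self, reassoc_of% K.ιTotal_πTotal_self, Category.comp_id]
  · rw [ιTotal_πTotal_of_ne _ hap, reassoc_of% K.ιTotal_πTotal_of_ne hap, comp_zero, zero_comp]

/-- The generalized element `x` of the total complex lies in the `p`-th step of the column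
filtration, i.e. its components in the columns of index less than `p` vanish. -/
def LiesInColumnsGE (p : ℤ) {A : C} {m : ℤ} (x : A ⟶ (K.total (.up ℤ)).X m) : Prop :=
  ∀ (a b : ℤ) (h : a + b = m), a < p → x ≫ K.πTotal a b m h = 0

lemma liesInColumnsGE_comp_ιTotal {A : C} {p q m : ℤ} (x : A ⟶ (K.X p).X q) (h : p + q = m) :
    K.LiesInColumnsGE p (x ≫ K.ιTotal (.up ℤ) p q m h) := fun a b hab hap => by
  rw [Category.assoc, ιTotal_πTotal_of_ne _ hap.ne', comp_zero]

namespace LiesInColumnsGE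

variable {K} {A A' : C} {p m m' : ℤ} {x x' : A ⟶ (K.total (.up ℤ)).X m}

lemma precomp (hx : K.LiesInColumnsGE p x) (π : A' ⟶ A) : K.LiesInColumnsGE p (π ≫ x) :=
  fun a b hab hap => by rw [Category.assoc, hx a b hab hap, comp_zero]

lemma add (hx : K.LiesInColumnsGE p x) (hx' : K.LiesInColumnsGE p x') :
    K.LiesInColumnsGE p (x + x') :=
  fun a b hab hap => by rw [Preadditive.add_comp, hx a b hab hap, hx' a b hab hap, add_zero]

lemma sub (hx : K.LiesInColumnsGE p x) (hx' : K.LiesInColumnsGE p x') :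
    K.LiesInColumnsGE p (x - x') :=
  fun a b hab hap => by rw [Preadditive.sub_comp, hx a b hab hap, hx' a b hab hap, sub_zero]

lemma comp_map (hx : K.LiesInColumnsGE p x) :
    L.LiesInColumnsGE p (x ≫ (HomologicalComplex₂.total.map φ (.up ℤ)).f m) :=
  fun a b hab hap => by rw [Category.assoc, map_πTotal, reassoc_of% hx a b hab hap, zero_comp]

lemma comp_d (hx : K.LiesInColumnsGE p x) (hm : m + 1 = m') :
    K.LiesInColumnsGE p (x ≫ (K.total (.up ℤ)).d m m') := fun a b hab hap => by
  rw [Category.assoc, K.d_πTotal (sub_add_cancel a 1) (sub_add_cancel b 1) hm hab,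
    Preadditive.comp_add, Linear.comp_units_smul, reassoc_of% hx (a - 1) b (by lia) (by lia),
    reassoc_of% hx a (b - 1) (by lia) hap]
  simp

lemma comp_d_πTotal {q q' : ℤ} (hx : K.LiesInColumnsGE p x) (hq : q + 1 = q') (hm : m + 1 = m')
    (h : p + q' = m') :
    (x ≫ (K.total (.up ℤ)).d m m') ≫ K.πTotal p q' m' h =
      p.negOnePow • ((x ≫ K.πTotal p q m (by lia)) ≫ (K.X p).d q q') := by
  rw [Category.assoc, K.d_πTotal (sub_add_cancel p 1) hq hm h, Preadditive.comp_add,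
    Linear.comp_units_smul, reassoc_of% hx (p - 1) q' (by lia) (by lia), zero_comp, zero_add,
    Category.assoc]

lemma succ {q : ℤ} (hx : K.LiesInColumnsGE p x) (h : p + q = m)
    (hxp : x ≫ K.πTotal p q m h = 0) : K.LiesInColumnsGE (p + 1) x := by
  intro a b hab hap
  obtain hap | rfl : a < p ∨ a = p := by lia
  · exact hx a b hab hap
  · obtain rfl : b = q := by lia
    exact hxp

end LiesInColumnsGE

variable {K}

lemma HasFiniteDiagonals.eq_zero_of_comp_πTotal (hK : K.HasFiniteDiagonals) {A : C} {m : ℤ}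
    (x : A ⟶ (K.total (.up ℤ)).X m)
    (hx : ∀ (p q : ℤ) (h : p + q = m), ¬ IsZero ((K.X p).X q) → x ≫ K.πTotal p q m h = 0) :
    x = 0 := by
  have id_eq_sum : 𝟙 ((K.total (.up ℤ)).X m) = ∑ p ∈ (hK m).toFinset,
      K.πTotal p (m - p) m (by lia) ≫ K.ιTotal (.up ℤ) p (m - p) m (add_sub_cancel p m) := by
    ext a b hab
    obtain rfl : b = m - a := eq_sub_of_add_eq' hab
    by_cases ha : IsZero ((K.X a).X (m - a))
    · exact ha.eq_of_src _ _
    rw [Preadditive.comp_sum, Finset.sum_eq_single_of_mem a (by simpa using ha),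
      reassoc_of% K.ιTotal_πTotal_self, Category.comp_id]
    intro p _ hpa
    rw [reassoc_of% K.ιTotal_πTotal_of_ne hpa.symm, zero_comp]
  rw [← Category.comp_id x, id_eq_sum, Preadditive.comp_sum]
  refine Finset.sum_eq_zero fun p hp => ?_
  rw [reassoc_of% hx p (m - p) (by lia) (by simpa using hp), zero_comp]

lemma HasFiniteDiagonals.exists_forall_liesInColumnsGE (hK : K.HasFiniteDiagonals) (m : ℤ) :
    ∃ a : ℤ, ∀ p ≤ a, ∀ ⦃A : C⦄ (x : A ⟶ (K.total (.up ℤ)).X m), K.LiesInColumnsGE p x := by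
  obtain ⟨a, ha⟩ := (hK m).bddBelow
  refine ⟨a, fun p hpa A x p' q h hp' => IsZero.eq_of_tgt ?_ _ _⟩
  obtain rfl : q = m - p' := by lia
  by_contra hne
  have : a ≤ p' := ha hne
  lia

lemma HasFiniteDiagonals.exists_forall_eq_zero (hK : K.HasFiniteDiagonals) (m : ℤ) :
    ∃ b : ℤ, ∀ p ≥ b, ∀ ⦃A : C⦄ (x : A ⟶ (K.total (.up ℤ)).X m),
      K.LiesInColumnsGE p x → x = 0 := by
  obtain ⟨b, hb⟩ := (hK m).bddAbove
  refine ⟨b + 1, fun p hbp A x hx => hK.eq_zero_of_comp_πTotal x fun p' q h hne => ?_⟩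
  obtain rfl : q = m - p' := by lia
  have : p' ≤ b := hb hne
  exact hx p' _ h (by lia)

variable {φ}

lemma isConeCocycle_comp_πTotal {p j k : ℤ} (hjk : j + 1 = k) {A : C}
    {x : A ⟶ (K.total (.up ℤ)).X k} {y : A ⟶ (L.total (.up ℤ)).X j}
    (hx : K.LiesInColumnsGE p x) (hy : L.LiesInColumnsGE p y)
    (h : IsConeCocycle (HomologicalComplex₂.total.map φ (.up ℤ)) x y) :
    IsConeCocycle (φ.f p) (x ≫ K.πTotal p (k - p) k (by lia))
      (p.negOnePow • (y ≫ L.πTotal p (j - p) j (by lia))) where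
  comp_d l := by
    by_cases hl : k - p + 1 = l
    · have hd := hx.comp_d_πTotal hl rfl (by lia)
      rwa [h.comp_d, zero_comp, eq_comm, smul_eq_zero_iff_eq] at hd
    · rw [(K.X p).shape _ _ hl, comp_zero]
  comp_map := by
    rw [Category.assoc, ← map_πTotal, ← Category.assoc, h.comp_map,
      hy.comp_d_πTotal (q := j - p) (by lia) hjk, Linear.units_smul_comp]

end Preadditive

section Abelian

variable [Abelian C] {K L : DoubleComplex C}
  [K.HasTotal (.up ℤ)] [L.HasTotal (.up ℤ)] {φ : K ⟶ L}

lemma exists_comp_sub_boundary_liesInColumnsGE_succ {p i j k : ℤ} [QuasiIso (φ.f p)]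
    (hij : i + 1 = j) (hjk : j + 1 = k) {A : C}
    {x : A ⟶ (K.total (.up ℤ)).X k} {y : A ⟶ (L.total (.up ℤ)).X j}
    (hx : K.LiesInColumnsGE p x) (hy : L.LiesInColumnsGE p y)
    (h : IsConeCocycle (HomologicalComplex₂.total.map φ (.up ℤ)) x y) :
    ∃ (A' : C) (π : A' ⟶ A) (_ : Epi π)
      (x' : A' ⟶ (K.total (.up ℤ)).X j) (y' : A' ⟶ (L.total (.up ℤ)).X i),
      K.LiesInColumnsGE (p + 1) (π ≫ x - x' ≫ (K.total (.up ℤ)).d j k) ∧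
      L.LiesInColumnsGE (p + 1) (π ≫ y -
        (x' ≫ (HomologicalComplex₂.total.map φ (.up ℤ)).f j + y' ≫ (L.total (.up ℤ)).d i j)) := by
  have hij' : i - p + 1 = j - p := by lia
  have hjk' : j - p + 1 = k - p := by lia
  obtain ⟨A', π, hπ, u, v, hu, hv⟩ :=
    (isConeCocycle_comp_πTotal hjk hx hy h).isConeBoundaryUpToRefinement hij' hjk'
  have hx' := K.liesInColumnsGE_comp_ιTotal (p.negOnePow • u) (add_sub_cancel p j)
  have hy' := L.liesInColumnsGE_comp_ιTotal v (add_sub_cancel p i)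
  refine ⟨A', π, hπ, _, _,
    ((hx.precomp π).sub (hx'.comp_d hjk)).succ (add_sub_cancel p k) ?_,
    ((hy.precomp π).sub ((hx'.comp_map φ).add (hy'.comp_d hij))).succ (add_sub_cancel p j) ?_⟩
  · rw [Preadditive.sub_comp, Category.assoc, hu, hx'.comp_d_πTotal hjk' hjk, Category.assoc,
      Category.assoc, reassoc_of% K.ιTotal_πTotal_self, Linear.units_smul_comp, smul_smul,
      Int.units_mul_self, one_smul, sub_self]
  · have hv' : π ≫ y ≫ L.πTotal p (j - p) j (by lia) =
        p.negOnePow • (u ≫ (φ.f p).f (j - p) + v ≫ (L.X p).d (i - p) (j - p)) := by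
      rw [← hv, Linear.comp_units_smul, smul_smul, Int.units_mul_self, one_smul]
    rw [Preadditive.sub_comp, Preadditive.add_comp, hy'.comp_d_πTotal hij' hij]
    simp only [Category.assoc, map_πTotal, ιTotal_πTotal_self, Category.comp_id,
      reassoc_of% K.ιTotal_πTotal_self]
    rw [hv', Linear.units_smul_comp, smul_add, sub_self]

lemma isConeBoundaryUpToRefinement_total_map {i j k a b : ℤ} (hφ : ∀ p, QuasiIso (φ.f p))
    (hij : i + 1 = j) (hjk : j + 1 = k) (hab : a ≤ b)
    (hK : ∀ ⦃A : C⦄ (x : A ⟶ (K.total (.up ℤ)).X k), K.LiesInColumnsGE b x → x = 0)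
    (hL : ∀ ⦃A : C⦄ (y : A ⟶ (L.total (.up ℤ)).X j), L.LiesInColumnsGE b y → y = 0)
    {A : C} {x : A ⟶ (K.total (.up ℤ)).X k} {y : A ⟶ (L.total (.up ℤ)).X j}
    (hx : K.LiesInColumnsGE a x) (hy : L.LiesInColumnsGE a y)
    (h : IsConeCocycle (HomologicalComplex₂.total.map φ (.up ℤ)) x y) :
    IsConeBoundaryUpToRefinement (HomologicalComplex₂.total.map φ (.up ℤ)) i x y := by
  induction a, hab using Int.leInductionDown generalizing A with
  | base =>
    obtain rfl := hK x hx
    obtain rfl := hL y hy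
    exact ⟨A, 𝟙 A, inferInstance, 0, 0, by simp, by simp⟩
  | pred p _ ih =>
    obtain ⟨A', π, _, x', y', hx', hy'⟩ :=
      exists_comp_sub_boundary_liesInColumnsGE_succ hij hjk hx hy h
    rw [sub_add_cancel] at hx' hy'
    exact .of_comp_sub_boundary π x' y' (ih hx' hy' (h.comp_sub_boundary π x' y'))

end Abelian

end DoubleComplex

theorem stmt11_general {C : Type u} [Category.{v} C] [Abelian C] {K L : DoubleComplex C}
    [K.HasTotal (ComplexShape.up ℤ)] [L.HasTotal (ComplexShape.up ℤ)]
    (hK : K.HasFiniteDiagonals) (hL : L.HasFiniteDiagonals)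
    (φ : K ⟶ L) (hφ : ∀ p : ℤ, QuasiIso (φ.f p)) :
    QuasiIso (HomologicalComplex₂.total.map φ (ComplexShape.up ℤ)) := by
  refine quasiIso_of_isConeBoundaryUpToRefinement _ fun i j k hij hjk A x y h => ?_
  obtain ⟨aK, haK⟩ := hK.exists_forall_liesInColumnsGE k
  obtain ⟨aL, haL⟩ := hL.exists_forall_liesInColumnsGE j
  obtain ⟨bK, hbK⟩ := hK.exists_forall_eq_zero k
  obtain ⟨bL, hbL⟩ := hL.exists_forall_eq_zero j
  exact DoubleComplex.isConeBoundaryUpToRefinement_total_map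
    (a := min aK aL) (b := max (max bK bL) aK)
    hφ hij hjk (by lia) (hbK _ (by lia)) (hbL _ (by lia))
    (haK _ (by lia) x) (haL _ (by lia) y) h

theorem stmt11 (R : Type) [Ring R] (n : ℕ)
    (K L : HomologicalComplex₂ (ModuleCat R) (ComplexShape.up ℤ) (ComplexShape.up ℤ))
    [K.HasTotal (ComplexShape.up ℤ)] [L.HasTotal (ComplexShape.up ℤ)]
    (hK : ∀ p q : ℤ, (p < 0 ∨ (n : ℤ) < p) → IsZero ((K.X p).X q))
    (hL : ∀ p q : ℤ, (p < 0 ∨ (n : ℤ) < p) → IsZero ((L.X p).X q))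
    (φ : K ⟶ L)
    (hφ : ∀ p : ℤ, QuasiIso (φ.f p)) :
    QuasiIso (HomologicalComplex₂.total.map φ (ComplexShape.up ℤ)) :=
  stmt11_general (DoubleComplex.hasFiniteDiagonals_of_isZero 0 n hK)
    (DoubleComplex.hasFiniteDiagonals_of_isZero 0 n hL) φ hφ
end

section
/- Let d ≥ 1 be an integer. For every smooth function f : ℝ^d → ℂ satisfying f(x + k) = f(x) for all x ∈ ℝ^d and k ∈ ℤ^d and ∫_{[0,1]^d} f(x) dx = 0, there exists a unique smooth function u : ℝ^d → ℂ satisfying u(x + k) = u(x) for all x ∈ ℝ^d and k ∈ ℤ^d, ∫_{[0,1]^d} u(x) dx = 0, and Δu = f, where Δ = Σ_{i=1}^d ∂²/∂x_i² is the Laplacian. -/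
open MeasureTheory

/-!
Pass to Fourier coefficients over the unit cube. For a periodic `g` the translation invariance of
`∫ g` over the cube makes every directional derivative integrate to zero, so that integration by
parts turns the Laplacian into multiplication by `-4π²|n|²`. Continuous periodic functions are
determined by their coefficients, so `u` solves the problem if and only if its coefficients are
those of `f` divided by `-4π²|n|²` (and `0` at `n = 0`). Existence is then the statement that these
numbers are the coefficients of a smooth function, which holds because the coefficients of a smooth
function decay faster than any power of `|n|`.
-/

noncomputable section

/-! ### Directional derivatives -/

section DirectionalDerivative

variable {V E : Type*} [NormedAddCommGroup V] [NormedSpace ℝ V] [NormedAddCommGroup E]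
  [NormedSpace ℝ E] {g : V → E}

lemma contDiff_fderiv_apply_const {m : ℕ} (hg : ContDiff ℝ (m + 1 : ℕ) g) (v : V) :
    ContDiff ℝ m fun x => fderiv ℝ g x v :=
  (hg.fderiv_right le_rfl).clm_apply contDiff_const

lemma continuous_fderiv_fderiv_apply (hg : ContDiff ℝ 2 g) (v w : V) :
    Continuous fun x => fderiv ℝ (fun y => fderiv ℝ g y v) x w :=
  (contDiff_fderiv_apply_const (m := 0) (contDiff_fderiv_apply_const (m := 1) hg v) w).continuous

lemma intervalIntegral_fderiv_line [CompleteSpace E] (hg : ContDiff ℝ 1 g) (x v : V) :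
    ∫ t in (0 : ℝ)..1, fderiv ℝ g (x + t • v) v = g (x + v) - g x := by
  have hasDerivAt_line (t : ℝ) :
      HasDerivAt (fun s : ℝ => g (x + s • v)) (fderiv ℝ g (x + t • v) v) t := by
    have line : HasDerivAt (fun s : ℝ => x + s • v) v t := by
      simpa using ((hasDerivAt_id t).smul_const v).const_add x
    exact (hg.differentiable one_ne_zero _).hasFDerivAt.comp_hasDerivAt t line
  have hcont : Continuous fun t : ℝ => fderiv ℝ g (x + t • v) v :=
    ((hg.continuous_fderiv one_ne_zero).comp (by fun_prop)).clm_apply continuous_const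
  rw [intervalIntegral.integral_eq_sub_of_hasDerivAt (fun t _ => hasDerivAt_line t)
    (hcont.intervalIntegrable 0 1)]
  simp

end DirectionalDerivative

/-! ### Periodic functions and the torus -/

variable {ι F : Type*} [NormedAddCommGroup F] [NormedSpace ℂ F]

/-- `ℤ^ι`-periodicity of a function on `ℝ^ι`. -/
def IsIntPeriodic {X : Type*} (g : (ι → ℝ) → X) : Prop :=
  ∀ (x : ι → ℝ) (k : ι → ℤ), g (x + fun i => (k i : ℝ)) = g x

/-- The closed unit cube `[0, 1]^ι`, a fundamental domain of `ℤ^ι` up to a null set. -/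
def unitCube (ι : Type*) : Set (ι → ℝ) :=
  Set.univ.pi fun _ : ι => Set.Icc (0 : ℝ) 1

lemma isCompact_unitCube : IsCompact (unitCube ι) := isCompact_univ_pi fun _ => isCompact_Icc

/-- The projection of `ℝ^ι` onto the torus `(ℝ / ℤ)^ι`. -/
def toTorus (x : ι → ℝ) : UnitAddTorus ι := fun i => (x i : UnitAddCircle)

lemma toTorus_eq_toTorus_iff {x y : ι → ℝ} :
    toTorus x = toTorus y ↔ ∃ k : ι → ℤ, x = y + fun i => (k i : ℝ) := by
  have coordinate (i : ι) :
      (x i : UnitAddCircle) = y i ↔ ∃ k : ℤ, x i = y i + k := by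
    rw [← sub_eq_zero, ← AddCircle.coe_sub, AddCircle.coe_eq_zero_iff]
    simp only [zsmul_eq_mul, mul_one, eq_comm, sub_eq_iff_eq_add']
  simp only [funext_iff, toTorus, Pi.add_apply, coordinate, Classical.skolem]

lemma isIntPeriodic_toTorus : IsIntPeriodic (toTorus (ι := ι)) := fun _ k =>
  toTorus_eq_toTorus_iff.2 ⟨k, rfl⟩

lemma isOpenQuotientMap_toTorus [Finite ι] : IsOpenQuotientMap (toTorus (ι := ι)) :=
  IsOpenQuotientMap.piMap fun _ => QuotientAddGroup.isOpenQuotientMap_mk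

namespace IsIntPeriodic

variable {X : Type*} {g : (ι → ℝ) → X}

lemma exists_comp_toTorus (hg : IsIntPeriodic g) :
    ∃ G : UnitAddTorus ι → X, ∀ x, G (toTorus x) = g x := by
  have surjective : Function.Surjective (toTorus (ι := ι)) :=
    Function.Surjective.piMap fun _ => QuotientAddGroup.mk_surjective
  refine ⟨g ∘ Function.surjInv surjective, fun x => ?_⟩
  obtain ⟨k, hk⟩ := toTorus_eq_toTorus_iff.1 (Function.surjInv_eq surjective (toTorus x))
  rw [Function.comp_apply, hk, hg]

lemma exists_continuousMap_comp_toTorus [Finite ι] [TopologicalSpace X]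
    (hg : IsIntPeriodic g) (hcont : Continuous g) :
    ∃ G : C(UnitAddTorus ι, X), ∀ x, G (toTorus x) = g x := by
  obtain ⟨G, hG⟩ := hg.exists_comp_toTorus
  have hGcont : Continuous G :=
    isOpenQuotientMap_toTorus.continuous_comp_iff.1 (hcont.congr fun x => (hG x).symm)
  exact ⟨⟨G, hGcont⟩, hG⟩

lemma comp {Y : Type*} (hg : IsIntPeriodic g) (φ : X → Y) : IsIntPeriodic fun x => φ (g x) :=
  fun x k => congrArg φ (hg x k)

lemma comp₂ {Y Z : Type*} {h : (ι → ℝ) → Y} (hg : IsIntPeriodic g) (hh : IsIntPeriodic h)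
    (φ : X → Y → Z) : IsIntPeriodic fun x => φ (g x) (h x) :=
  fun x k => congrArg₂ φ (hg x k) (hh x k)

lemma isIntPeriodic_fderiv [Finite ι] {E : Type*} [NormedAddCommGroup E] [NormedSpace ℝ E]
    {g : (ι → ℝ) → E} (hg : IsIntPeriodic g) : IsIntPeriodic (fderiv ℝ g) := by
  cases nonempty_fintype ι
  intro x k
  rw [← fderiv_comp_add_right]
  exact congrArg (fderiv ℝ · x) (funext fun y => hg y k)

end IsIntPeriodic

section FintypeIndex

variable [Fintype ι]

/-! ### Integration over the unit cube -/

lemma volume_unitCube : volume (unitCube ι) = 1 := by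
  simp only [unitCube, volume_pi_pi, Real.volume_Icc, sub_zero, ENNReal.ofReal_one,
    Finset.prod_const_one]

instance : IsProbabilityMeasure (volume.restrict (unitCube ι)) :=
  ⟨by rw [Measure.restrict_apply_univ, volume_unitCube]⟩

section Integration

variable {E : Type*} [NormedAddCommGroup E]

lemma integrableOn_unitCube {g : (ι → ℝ) → E} (hg : Continuous g) :
    IntegrableOn g (unitCube ι) :=
  hg.continuousOn.integrableOn_compact isCompact_unitCube

variable [NormedSpace ℝ E] {g : (ι → ℝ) → E}

lemma setIntegral_unitCube_eq_setIntegral_Ioc (g : (ι → ℝ) → E) :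
    ∫ x in unitCube ι, g x =
      ∫ x in {x : ι → ℝ | ∀ i, x i ∈ Set.Ioc ((0 : ι → ℝ) i) ((0 : ι → ℝ) i + 1)}, g x := by
  have box_eq : {x : ι → ℝ | ∀ i, x i ∈ Set.Ioc ((0 : ι → ℝ) i) ((0 : ι → ℝ) i + 1)} =
      Set.univ.pi fun i => Set.Ioc ((0 : ι → ℝ) i) ((1 : ι → ℝ) i) := by
    ext x
    simp
  have cube_eq : unitCube ι = Set.Icc 0 1 := Set.pi_univ_Icc 0 1
  rw [box_eq, cube_eq, volume_pi, setIntegral_congr_set Measure.univ_pi_Ioc_ae_eq_Icc]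

-- Both sides are integrals over a translated half-open cube, hence equal the integral over the
-- torus.
lemma IsIntPeriodic.setIntegral_unitCube_add_right (hg : IsIntPeriodic g) (a : ι → ℝ) :
    ∫ x in unitCube ι, g (x + a) = ∫ x in unitCube ι, g x := by
  obtain ⟨G, hG⟩ := hg.exists_comp_toTorus
  have integral_box_eq (b : ι → ℝ) := UnitAddTorus.integral_preimage G b
  change ∀ b : ι → ℝ, _ = ∫ x in {x : ι → ℝ | _}, G (toTorus x) at integral_box_eq
  simp only [hG] at integral_box_eq
  have preimage_box : (· + a) ⁻¹' {x : ι → ℝ | ∀ i, x i ∈ Set.Ioc (a i) (a i + 1)} =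
      {x : ι → ℝ | ∀ i, x i ∈ Set.Ioc ((0 : ι → ℝ) i) ((0 : ι → ℝ) i + 1)} := by
    ext x
    simp [add_comm (a _)]
  rw [setIntegral_unitCube_eq_setIntegral_Ioc, setIntegral_unitCube_eq_setIntegral_Ioc,
    ← integral_box_eq 0, integral_box_eq a, ← preimage_box]
  exact (measurePreserving_add_right volume a).setIntegral_preimage_emb
    (measurableEmbedding_addRight a) g _

theorem IsIntPeriodic.setIntegral_unitCube_fderiv_apply [CompleteSpace E] (hper : IsIntPeriodic g)
    (hg : ContDiff ℝ 1 g) (v : ι → ℝ) : ∫ x in unitCube ι, fderiv ℝ g x v = 0 := by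
  have hper' : IsIntPeriodic fun x => fderiv ℝ g x v := hper.isIntPeriodic_fderiv.comp (· v)
  have hcont : Continuous fun p : ℝ × (ι → ℝ) => fderiv ℝ g (p.2 + p.1 • v) v :=
    ((hg.continuous_fderiv one_ne_zero).comp (by fun_prop)).clm_apply continuous_const
  have hint : Integrable (fun p : ℝ × (ι → ℝ) => fderiv ℝ g (p.2 + p.1 • v) v)
      ((volume.restrict (Set.uIoc 0 1)).prod (volume.restrict (unitCube ι))) := by
    rw [Measure.prod_restrict]
    refine (hcont.continuousOn.integrableOn_compact (K := Set.Icc 0 1 ×ˢ unitCube ι)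
      (isCompact_Icc.prod isCompact_unitCube)).mono_set ?_
    exact Set.prod_mono_left (Set.uIoc_of_le (zero_le_one' ℝ) ▸ Set.Ioc_subset_Icc_self)
  calc ∫ x in unitCube ι, fderiv ℝ g x v
      = ∫ t in (0 : ℝ)..1, ∫ x in unitCube ι, fderiv ℝ g (x + t • v) v := by
        simp [hper'.setIntegral_unitCube_add_right]
    _ = ∫ x in unitCube ι, ∫ t in (0 : ℝ)..1, fderiv ℝ g (x + t • v) v :=
        intervalIntegral_integral_swap hint
    _ = ∫ x in unitCube ι, (g (x + v) - g x) := by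
        simp only [intervalIntegral_fderiv_line hg]
    _ = 0 := by
        have hcont_add : Continuous fun x => g (x + v) := hg.continuous.comp (by fun_prop)
        rw [integral_sub (integrableOn_unitCube hcont_add) (integrableOn_unitCube hg.continuous),
          hper.setIntegral_unitCube_add_right, sub_self]

end Integration

/-! ### Plane waves -/

/-- The exponent of the plane wave of frequency `n`: the linear form `x ↦ 2πi ⟨n, x⟩`. -/
def phase (n : ι → ℤ) : (ι → ℝ) →L[ℝ] ℂ :=
  (2 * Real.pi * Complex.I) •
    Complex.ofRealCLM.comp (∑ i, (n i : ℝ) • ContinuousLinearMap.proj (R := ℝ) i)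

lemma phase_apply (n : ι → ℤ) (x : ι → ℝ) :
    phase n x = 2 * Real.pi * Complex.I * ((∑ i, n i * x i : ℝ) : ℂ) := by
  simp [phase]

lemma phase_single [DecidableEq ι] (n : ι → ℤ) (i : ι) :
    phase n (Pi.single i 1) = 2 * Real.pi * Complex.I * n i := by
  simp [phase_apply, Pi.single_apply]

lemma norm_phase_le (n : ι → ℤ) : ‖phase n‖ ≤ 2 * Real.pi * Fintype.card ι * ‖n‖ := by
  refine ContinuousLinearMap.opNorm_le_bound _ (by positivity) fun x => ?_
  calc ‖phase n x‖ = 2 * Real.pi * ‖∑ i, n i * x i‖ := by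
        rw [phase_apply, norm_mul, Complex.norm_real]
        simp [abs_of_pos Real.pi_pos]
    _ ≤ 2 * Real.pi * ∑ _i : ι, ‖n‖ * ‖x‖ := by
        gcongr
        refine norm_sum_le_of_le _ fun i _ => ?_
        rw [norm_mul, Int.norm_cast_real]
        gcongr
        exacts [norm_le_pi_norm n i, norm_le_pi_norm x i]
    _ = 2 * Real.pi * Fintype.card ι * ‖n‖ * ‖x‖ := by
        rw [Finset.sum_const, Finset.card_univ, nsmul_eq_mul]
        ring

/-- The plane wave `x ↦ exp (2πi ⟨n, x⟩)`, defined as the pullback of the corresponding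
character of the torus. -/
def planeWave (n : ι → ℤ) (x : ι → ℝ) : ℂ := UnitAddTorus.mFourier n (toTorus x)

lemma planeWave_eq_exp (n : ι → ℤ) : planeWave n = fun x => Complex.exp (phase n x) := by
  ext x
  simp only [planeWave, UnitAddTorus.mFourier, ContinuousMap.coe_mk, toTorus, fourier_coe_apply,
    phase_apply, ← Complex.exp_sum]
  push_cast
  simp only [Finset.mul_sum, div_one, mul_assoc]

lemma isIntPeriodic_planeWave (n : ι → ℤ) : IsIntPeriodic (planeWave n) :=
  isIntPeriodic_toTorus.comp _

lemma norm_planeWave (n : ι → ℤ) (x : ι → ℝ) : ‖planeWave n x‖ = 1 := by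
  simp only [planeWave, UnitAddTorus.mFourier, ContinuousMap.coe_mk, fourier_apply, norm_prod,
    Circle.norm_coe, Finset.prod_const_one]

lemma planeWave_zero (x : ι → ℝ) : planeWave 0 x = 1 := by
  simp [planeWave, UnitAddTorus.mFourier_zero]

lemma planeWave_add (m n : ι → ℤ) (x : ι → ℝ) :
    planeWave (m + n) x = planeWave m x * planeWave n x :=
  UnitAddTorus.mFourier_add

lemma contDiff_planeWave (n : ι → ℤ) {N : WithTop ℕ∞} : ContDiff ℝ N (planeWave n) := by
  rw [planeWave_eq_exp]
  exact (phase n).contDiff.cexp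

lemma continuous_planeWave (n : ι → ℤ) : Continuous (planeWave n) :=
  (contDiff_planeWave n (N := 0)).continuous

lemma hasFDerivAt_planeWave (n : ι → ℤ) (x : ι → ℝ) :
    HasFDerivAt (planeWave n) (planeWave n x • phase n) x := by
  rw [planeWave_eq_exp]
  exact (phase n).hasFDerivAt.cexp

lemma norm_iteratedFDeriv_planeWave_le (n : ι → ℤ) (k : ℕ) (x : ι → ℝ) :
    ‖iteratedFDeriv ℝ k (planeWave n) x‖ ≤ ‖phase n‖ ^ k := by
  induction k with
  | zero => simp [norm_planeWave]
  | succ k ih =>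
    let smulPhase : ℂ →L[ℝ] ((ι → ℝ) →L[ℝ] ℂ) :=
      (ContinuousLinearMap.toSpanSingleton ℂ (phase n)).restrictScalars ℝ
    have fderiv_eq : fderiv ℝ (planeWave n) = smulPhase ∘ planeWave n :=
      funext fun y => (hasFDerivAt_planeWave n y).fderiv
    calc ‖iteratedFDeriv ℝ (k + 1) (planeWave n) x‖
        = ‖iteratedFDeriv ℝ k (smulPhase ∘ planeWave n) x‖ := by
          rw [← norm_iteratedFDeriv_fderiv, fderiv_eq]
      _ ≤ ‖smulPhase‖ * ‖iteratedFDeriv ℝ k (planeWave n) x‖ :=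
          smulPhase.norm_iteratedFDeriv_comp_left
            (contDiff_planeWave n (N := k)).contDiffAt le_rfl
      _ ≤ ‖phase n‖ ^ (k + 1) := by
          rw [pow_succ']
          gcongr
          simp [smulPhase]

lemma norm_iteratedFDeriv_planeWave_smul_le (n : ι → ℤ) (c : F) (k : ℕ) (x : ι → ℝ) :
    ‖iteratedFDeriv ℝ k (fun y => planeWave n y • c) x‖ ≤ ‖c‖ * ‖phase n‖ ^ k := by
  let smulC : ℂ →L[ℝ] F := (ContinuousLinearMap.toSpanSingleton ℂ c).restrictScalars ℝ
  calc ‖iteratedFDeriv ℝ k (smulC ∘ planeWave n) x‖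
      ≤ ‖smulC‖ * ‖iteratedFDeriv ℝ k (planeWave n) x‖ :=
        smulC.norm_iteratedFDeriv_comp_left (contDiff_planeWave n (N := k)).contDiffAt le_rfl
    _ ≤ ‖c‖ * ‖phase n‖ ^ k := by
        gcongr
        · simp [smulC]
        · exact norm_iteratedFDeriv_planeWave_le n k x

lemma setIntegral_unitCube_planeWave (n : ι → ℤ) :
    ∫ x in unitCube ι, planeWave n x = if n = 0 then 1 else 0 := by
  classical
  split_ifs with hn
  · simp [hn, planeWave_zero]
  · obtain ⟨i, hi⟩ := Function.ne_iff.1 hn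
    have phase_ne_zero : phase n (Pi.single i 1) ≠ 0 := by
      rw [phase_single]
      exact mul_ne_zero Complex.two_pi_I_ne_zero (Int.cast_ne_zero.2 hi)
    have h := (isIntPeriodic_planeWave n).setIntegral_unitCube_fderiv_apply
      (contDiff_planeWave n) (Pi.single i 1)
    simp only [(hasFDerivAt_planeWave n _).fderiv, smul_apply, smul_eq_mul,
      integral_mul_const] at h
    exact (mul_eq_zero.1 h).resolve_right phase_ne_zero

/-! ### Fourier coefficients over the unit cube -/

/-- The `n`-th Fourier coefficient `∫ exp (-2πi ⟨n, x⟩) g x dx` over the unit cube. -/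
def cubeFourierCoeff (g : (ι → ℝ) → F) (n : ι → ℤ) : F :=
  ∫ x in unitCube ι, planeWave (-n) x • g x

variable {g h : (ι → ℝ) → F}

lemma cubeFourierCoeff_zero (g : (ι → ℝ) → F) :
    cubeFourierCoeff g 0 = ∫ x in unitCube ι, g x := by
  simp [cubeFourierCoeff, planeWave_zero]

lemma integrableOn_planeWave_smul (n : ι → ℤ) (hg : Continuous g) :
    IntegrableOn (fun x => planeWave n x • g x) (unitCube ι) :=
  integrableOn_unitCube ((continuous_planeWave n).smul hg)

lemma cubeFourierCoeff_sub (hg : Continuous g) (hh : Continuous h) (n : ι → ℤ) :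
    cubeFourierCoeff (fun x => g x - h x) n = cubeFourierCoeff g n - cubeFourierCoeff h n := by
  simp only [cubeFourierCoeff, smul_sub]
  exact integral_sub (integrableOn_planeWave_smul _ hg) (integrableOn_planeWave_smul _ hh)

lemma cubeFourierCoeff_sum {α : Type*} (s : Finset α) {g : α → (ι → ℝ) → F}
    (hg : ∀ a ∈ s, Continuous (g a)) (n : ι → ℤ) :
    cubeFourierCoeff (fun x => ∑ a ∈ s, g a x) n = ∑ a ∈ s, cubeFourierCoeff (g a) n := by
  simp only [cubeFourierCoeff, Finset.smul_sum]
  exact integral_finsetSum s fun a ha => integrableOn_planeWave_smul _ (hg a ha)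

lemma norm_cubeFourierCoeff_le (g : (ι → ℝ) → F) (n : ι → ℤ) :
    ‖cubeFourierCoeff g n‖ ≤ ∫ x in unitCube ι, ‖g x‖ := by
  refine (norm_integral_le_integral_norm _).trans_eq ?_
  simp only [norm_smul, norm_planeWave, one_mul]

lemma mFourierCoeff_eq_cubeFourierCoeff {G : UnitAddTorus ι → F}
    (hG : ∀ x, G (toTorus x) = g x) (n : ι → ℤ) :
    UnitAddTorus.mFourierCoeff G n = cubeFourierCoeff g n := by
  rw [UnitAddTorus.mFourierCoeff_eq_integral G n 0, cubeFourierCoeff,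
    setIntegral_unitCube_eq_setIntegral_Ioc]
  simp only [← hG]
  rfl

lemma eq_zero_of_cubeFourierCoeff_eq_zero_of_complex {g : (ι → ℝ) → ℂ} (hg : Continuous g)
    (hper : IsIntPeriodic g) (hzero : ∀ n, cubeFourierCoeff g n = 0) : g = 0 := by
  obtain ⟨G, hG⟩ := hper.exists_continuousMap_comp_toTorus hg
  have coeff_eq_zero : UnitAddTorus.mFourierCoeff G = 0 :=
    funext fun n => (mFourierCoeff_eq_cubeFourierCoeff hG n).trans (hzero n)
  ext x
  have series := UnitAddTorus.hasSum_mFourier_series_apply_of_summable (f := G)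
    (by rw [coeff_eq_zero]; exact summable_zero) (toTorus x)
  simp only [coeff_eq_zero, Pi.zero_apply, zero_smul, hG] at series
  exact series.unique hasSum_zero

section Complete

variable [CompleteSpace F]

lemma cubeFourierCoeff_clm_comp (φ : F →L[ℂ] ℂ) (hg : Continuous g) (n : ι → ℤ) :
    cubeFourierCoeff (fun x => φ (g x)) n = φ (cubeFourierCoeff g n) := by
  rw [cubeFourierCoeff, cubeFourierCoeff,
    ← φ.integral_comp_comm (integrableOn_planeWave_smul _ hg)]
  simp only [map_smul]

theorem eq_of_cubeFourierCoeff_eq (hg : Continuous g) (hgper : IsIntPeriodic g)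
    (hh : Continuous h) (hhper : IsIntPeriodic h)
    (hcoeff : ∀ n, cubeFourierCoeff g n = cubeFourierCoeff h n) : g = h := by
  have dual_eq (φ : F →L[ℂ] ℂ) : (fun x => φ (g x - h x)) = 0 := by
    have hcont : Continuous fun x => g x - h x := hg.sub hh
    refine eq_zero_of_cubeFourierCoeff_eq_zero_of_complex (φ.continuous.comp hcont)
      (hgper.comp₂ hhper fun a b => φ (a - b)) fun n => ?_
    rw [cubeFourierCoeff_clm_comp φ hcont, cubeFourierCoeff_sub hg hh, hcoeff, sub_self,
      map_zero]
  ext x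
  exact sub_eq_zero.1 <| SeparatingDual.eq_zero_of_forall_dual_eq_zero (R := ℂ)
    fun φ => congrFun (dual_eq φ) x

-- Integration by parts: `∫ D(e₋ₙ g) v = 0` and `D e₋ₙ v = -(phase n v) e₋ₙ`.
theorem cubeFourierCoeff_fderiv_apply (hg : ContDiff ℝ 1 g) (hper : IsIntPeriodic g)
    (v : ι → ℝ) (n : ι → ℤ) :
    cubeFourierCoeff (fun x => fderiv ℝ g x v) n = phase n v • cubeFourierCoeff g n := by
  have product_rule (x : ι → ℝ) : fderiv ℝ (fun y => planeWave (-n) y • g y) x v =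
      planeWave (-n) x • fderiv ℝ g x v - phase n v • planeWave (-n) x • g x := by
    have phase_neg : phase (-n) v = -phase n v := by simp [phase_apply]
    rw [((hasFDerivAt_planeWave (-n) x).fun_smul
      (hg.differentiable one_ne_zero x).hasFDerivAt).fderiv]
    simp [phase_neg, smul_smul, mul_comm, sub_eq_add_neg]
  have h := ((isIntPeriodic_planeWave (-n)).comp₂ hper (· • ·)).setIntegral_unitCube_fderiv_apply
    ((contDiff_planeWave (-n)).smul hg) v
  have hcont : Continuous fun x => fderiv ℝ g x v :=
    (hg.continuous_fderiv one_ne_zero).clm_apply continuous_const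
  simp only [product_rule] at h
  rw [integral_sub (integrableOn_planeWave_smul _ hcont)
    ((integrableOn_planeWave_smul _ hg.continuous).fun_smul _), integral_smul] at h
  exact sub_eq_zero.1 h

end Complete

/-! ### Decay of Fourier coefficients -/

lemma summable_norm_inv_pow_int {m : ℕ} (hm : Fintype.card ι < m) :
    Summable fun n : ι → ℤ => ‖n‖⁻¹ ^ m := by
  let b := Pi.basisFun ℝ ι
  let L := Submodule.span ℤ (Set.range b)
  let coords : L ≃ₗ[ℤ] (ι → ℤ) := (b.restrictScalars ℤ).equivFun
  have finrank_eq : Module.finrank ℤ L = Fintype.card ι :=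
    Module.finrank_eq_card_basis (b.restrictScalars ℤ)
  have coe_basis (i : ι) : (b.restrictScalars ℤ i : ι → ℝ) = b i :=
    b.restrictScalars_apply ℤ i
  have coe_coords_symm (n : ι → ℤ) : (coords.symm n : ι → ℝ) = fun i => (n i : ℝ) := by
    classical
    ext j
    simp only [coords, Module.Basis.equivFun_symm_apply, Submodule.coe_sum, Submodule.coe_smul,
      coe_basis]
    simp [b, Pi.single_apply]
  have norm_coords_symm (n : ι → ℤ) : ‖coords.symm n‖ = ‖n‖ := by
    rw [Submodule.coe_norm, coe_coords_symm]
    simp only [Pi.norm_def, nnnorm, Int.norm_eq_abs, Real.norm_eq_abs]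
  have hL := ZLattice.summable_norm_pow_inv L m (finrank_eq.trans_lt hm)
  rw [← coords.symm.toEquiv.summable_iff] at hL
  exact hL.congr fun n => congrArg (·⁻¹ ^ m) (norm_coords_symm n)

section Complete

variable [CompleteSpace F]

lemma norm_mul_norm_cubeFourierCoeff_le [DecidableEq ι] (hg : ContDiff ℝ 1 g)
    (hper : IsIntPeriodic g) (n : ι → ℤ) :
    ‖n‖ * ‖cubeFourierCoeff g n‖ ≤
      ∑ i, ‖cubeFourierCoeff (fun x => fderiv ℝ g x (Pi.single i 1)) n‖ := by
  have norm_le_sum : ‖n‖ ≤ ∑ i, ‖n i‖ :=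
    (pi_norm_le_iff_of_nonneg (by positivity)).2 fun i =>
      Finset.single_le_sum (f := fun j => ‖n j‖) (fun j _ => norm_nonneg _) (Finset.mem_univ i)
  have norm_le_norm_phase (i : ι) : ‖n i‖ ≤ ‖phase n (Pi.single i 1)‖ := by
    have one_le_two_pi : 1 ≤ 2 * Real.pi := by linarith [Real.pi_gt_three]
    simpa [phase_single, abs_of_pos Real.pi_pos, Int.norm_eq_abs] using
      le_mul_of_one_le_left (abs_nonneg (n i : ℝ)) one_le_two_pi
  calc ‖n‖ * ‖cubeFourierCoeff g n‖
      ≤ (∑ i, ‖phase n (Pi.single i 1)‖) * ‖cubeFourierCoeff g n‖ := by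
        gcongr
        exact norm_le_sum.trans (Finset.sum_le_sum fun i _ => norm_le_norm_phase i)
    _ = ∑ i, ‖cubeFourierCoeff (fun x => fderiv ℝ g x (Pi.single i 1)) n‖ := by
        simp only [cubeFourierCoeff_fderiv_apply hg hper, norm_smul, Finset.sum_mul]

theorem exists_norm_pow_mul_norm_cubeFourierCoeff_le (k : ℕ) {g : (ι → ℝ) → F}
    (hg : ContDiff ℝ k g) (hper : IsIntPeriodic g) :
    ∃ C, ∀ n, ‖n‖ ^ k * ‖cubeFourierCoeff g n‖ ≤ C := by
  classical
  induction k generalizing g with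
  | zero => exact ⟨_, fun n => by simpa using norm_cubeFourierCoeff_le g n⟩
  | succ k ih =>
    have partial_bounded (i : ι) : ∃ C, ∀ n,
        ‖n‖ ^ k * ‖cubeFourierCoeff (fun x => fderiv ℝ g x (Pi.single i 1)) n‖ ≤ C :=
      ih (contDiff_fderiv_apply_const hg _) (hper.isIntPeriodic_fderiv.comp (· _))
    choose C hC using partial_bounded
    refine ⟨∑ i, C i, fun n => ?_⟩
    calc ‖n‖ ^ (k + 1) * ‖cubeFourierCoeff g n‖
        = ‖n‖ ^ k * (‖n‖ * ‖cubeFourierCoeff g n‖) := by ring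
      _ ≤ ‖n‖ ^ k * ∑ i, ‖cubeFourierCoeff (fun x => fderiv ℝ g x (Pi.single i 1)) n‖ := by
          gcongr
          exact norm_mul_norm_cubeFourierCoeff_le (hg.of_le (by simp)) hper n
      _ ≤ ∑ i, C i := by
          rw [Finset.mul_sum]
          exact Finset.sum_le_sum fun i _ => hC i n

theorem summable_norm_pow_mul_norm_cubeFourierCoeff (k : ℕ)
    (hg : ContDiff ℝ (k + (Fintype.card ι + 1) : ℕ) g) (hper : IsIntPeriodic g) :
    Summable fun n => ‖n‖ ^ k * ‖cubeFourierCoeff g n‖ := by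
  obtain ⟨C, hC⟩ := exists_norm_pow_mul_norm_cubeFourierCoeff_le _ hg hper
  refine ((summable_norm_inv_pow_int (Nat.lt_succ_self (Fintype.card ι))).mul_left
    C).of_norm_bounded_eventually ?_
  filter_upwards [Filter.eventually_cofinite_ne 0] with n hn
  have : 0 < ‖n‖ := norm_pos_iff.2 hn
  rw [Real.norm_of_nonneg (by positivity), inv_pow, ← div_eq_mul_inv,
    le_div_iff₀ (by positivity)]
  calc ‖n‖ ^ k * ‖cubeFourierCoeff g n‖ * ‖n‖ ^ (Fintype.card ι + 1)
      = ‖n‖ ^ (k + (Fintype.card ι + 1)) * ‖cubeFourierCoeff g n‖ := by ring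
    _ ≤ C := hC n

end Complete

/-! ### Fourier series with prescribed coefficients -/

/-- The sum of the Fourier series with coefficients `a`; it is `0` at points where the series
does not converge. -/
def planeWaveSeries (a : (ι → ℤ) → F) (x : ι → ℝ) : F := ∑' n, planeWave n x • a n

lemma isIntPeriodic_planeWaveSeries (a : (ι → ℤ) → F) : IsIntPeriodic (planeWaveSeries a) :=
  fun x k => tsum_congr fun n => by rw [isIntPeriodic_planeWave n x k]

section Complete

variable [CompleteSpace F] {a : (ι → ℤ) → F}

theorem contDiff_planeWaveSeries {N : ℕ∞}
    (ha : ∀ k : ℕ, k ≤ N → Summable fun n => ‖n‖ ^ k * ‖a n‖) :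
    ContDiff ℝ N (planeWaveSeries a) := by
  refine contDiff_tsum
    (v := fun k n => (2 * Real.pi * Fintype.card ι) ^ k * (‖n‖ ^ k * ‖a n‖))
    (fun n => (contDiff_planeWave n).smul contDiff_const) (fun k hk => (ha k hk).mul_left _)
    fun k n x _ => ?_
  calc ‖iteratedFDeriv ℝ k (fun y => planeWave n y • a n) x‖
      ≤ ‖a n‖ * ‖phase n‖ ^ k := norm_iteratedFDeriv_planeWave_smul_le n (a n) k x
    _ ≤ ‖a n‖ * (2 * Real.pi * Fintype.card ι * ‖n‖) ^ k := by
        gcongr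
        exact norm_phase_le n
    _ = (2 * Real.pi * Fintype.card ι) ^ k * (‖n‖ ^ k * ‖a n‖) := by ring

theorem cubeFourierCoeff_planeWaveSeries (ha : Summable fun n => ‖a n‖) (m : ι → ℤ) :
    cubeFourierCoeff (planeWaveSeries a) m = a m := by
  let term (n : ι → ℤ) (x : ι → ℝ) : F := planeWave (-m) x • planeWave n x • a n
  have integrable_term (n : ι → ℤ) : IntegrableOn (term n) (unitCube ι) :=
    integrableOn_planeWave_smul _ ((continuous_planeWave n).smul continuous_const)
  have integral_norm_term (n : ι → ℤ) : ∫ x in unitCube ι, ‖term n x‖ = ‖a n‖ := by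
    simp [term, norm_smul, norm_planeWave]
  have integral_term (n : ι → ℤ) :
      ∫ x in unitCube ι, term n x = if n = m then a m else 0 := by
    simp only [term, smul_smul, ← planeWave_add, integral_smul_const,
      setIntegral_unitCube_planeWave, neg_add_eq_zero, eq_comm (a := m)]
    split_ifs with hnm <;> simp [hnm]
  have hasSum_integral := hasSum_integral_of_summable_integral_norm integrable_term
    (by simpa only [integral_norm_term] using ha)
  simp only [integral_term] at hasSum_integral
  calc cubeFourierCoeff (planeWaveSeries a) m
      = ∫ x in unitCube ι, ∑' n, term n x := by
        refine integral_congr_ae (.of_forall fun x => ?_)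
        exact (tsum_const_smul'' _).symm
    _ = a m := hasSum_integral.unique (hasSum_ite_eq m (a m))

end Complete

/-! ### The Laplacian -/

/-- The eigenvalue `-4π²|n|²` of the Laplacian on the plane wave of frequency `n`. -/
def laplacianEigenvalue (n : ι → ℤ) : ℝ := -(4 * Real.pi ^ 2 * ∑ i, (n i : ℝ) ^ 2)

lemma one_le_norm_laplacianEigenvalue {n : ι → ℤ} (hn : n ≠ 0) : 1 ≤ ‖laplacianEigenvalue n‖ := by
  obtain ⟨i, hi⟩ := Function.ne_iff.1 hn
  have one_le_sum : 1 ≤ ∑ j, (n j : ℝ) ^ 2 :=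
    calc (1 : ℝ) ≤ (n i : ℝ) ^ 2 := by exact_mod_cast Int.add_one_le_of_lt (sq_pos_of_ne_zero hi)
      _ ≤ ∑ j, (n j : ℝ) ^ 2 :=
        Finset.single_le_sum (f := fun j => (n j : ℝ) ^ 2) (fun j _ => sq_nonneg _)
          (Finset.mem_univ i)
  have one_le_four_pi_sq : 1 ≤ 4 * Real.pi ^ 2 := by nlinarith [Real.pi_gt_three]
  rw [laplacianEigenvalue, norm_neg, Real.norm_of_nonneg (by positivity)]
  exact one_le_mul_of_one_le_of_one_le one_le_four_pi_sq one_le_sum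

lemma laplacianEigenvalue_ne_zero {n : ι → ℤ} (hn : n ≠ 0) : laplacianEigenvalue n ≠ 0 :=
  norm_pos_iff.1 (one_pos.trans_le (one_le_norm_laplacianEigenvalue hn))

lemma norm_inv_laplacianEigenvalue_le_one (n : ι → ℤ) : ‖(laplacianEigenvalue n)⁻¹‖ ≤ 1 := by
  obtain rfl | hn := eq_or_ne n 0
  · simp [laplacianEigenvalue]
  · rw [norm_inv]
    exact inv_le_one_of_one_le₀ (one_le_norm_laplacianEigenvalue hn)

theorem summable_norm_pow_mul_norm_inv_laplacianEigenvalue_smul [CompleteSpace F]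
    {f : (ι → ℝ) → F} (k : ℕ)
    (hf : ContDiff ℝ (k + (Fintype.card ι + 1) : ℕ) f) (hper : IsIntPeriodic f) :
    Summable fun n => ‖n‖ ^ k * ‖(laplacianEigenvalue n)⁻¹ • cubeFourierCoeff f n‖ := by
  refine (summable_norm_pow_mul_norm_cubeFourierCoeff k hf hper).of_nonneg_of_le
    (fun n => by positivity) fun n => ?_
  gcongr
  rw [norm_smul]
  exact mul_le_of_le_one_left (norm_nonneg _) (norm_inv_laplacianEigenvalue_le_one n)

variable [DecidableEq ι]

lemma sum_phase_single_sq (n : ι → ℤ) :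
    ∑ i, phase n (Pi.single i 1) ^ 2 = (laplacianEigenvalue n : ℂ) := by
  simp only [phase_single, laplacianEigenvalue, mul_pow, Complex.I_sq, ← Finset.mul_sum]
  push_cast
  ring

/-- The Laplacian `∑ i, ∂²g/∂x_i²` on `ℝ^ι`. It is written in coordinates because `ι → ℝ` carries
the sup norm and is not an inner product space. -/
def piLaplacian (g : (ι → ℝ) → F) (x : ι → ℝ) : F :=
  ∑ i, fderiv ℝ (fun y => fderiv ℝ g y (Pi.single i 1)) x (Pi.single i 1)

lemma continuous_piLaplacian (hg : ContDiff ℝ 2 g) : Continuous (piLaplacian g) :=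
  continuous_finsetSum _ fun _ _ => continuous_fderiv_fderiv_apply hg _ _

lemma IsIntPeriodic.isIntPeriodic_piLaplacian (hper : IsIntPeriodic g) :
    IsIntPeriodic (piLaplacian g) := fun x k =>
  Finset.sum_congr rfl fun _ _ =>
    (hper.isIntPeriodic_fderiv.comp (· _)).isIntPeriodic_fderiv.comp (· _) x k

variable [CompleteSpace F]

theorem cubeFourierCoeff_piLaplacian (hg : ContDiff ℝ 2 g) (hper : IsIntPeriodic g) (n : ι → ℤ) :
    cubeFourierCoeff (piLaplacian g) n = laplacianEigenvalue n • cubeFourierCoeff g n := by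
  have second_partial (i : ι) :
      cubeFourierCoeff
        (fun x => fderiv ℝ (fun y => fderiv ℝ g y (Pi.single i 1)) x (Pi.single i 1)) n =
      phase n (Pi.single i 1) ^ 2 • cubeFourierCoeff g n := by
    rw [cubeFourierCoeff_fderiv_apply (contDiff_fderiv_apply_const (m := 1) hg _)
      (hper.isIntPeriodic_fderiv.comp (· _)),
      cubeFourierCoeff_fderiv_apply (hg.of_le one_le_two) hper, smul_smul, sq]
  calc cubeFourierCoeff (piLaplacian g) n
      = ∑ i, phase n (Pi.single i 1) ^ 2 • cubeFourierCoeff g n := by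
        simp only [← second_partial]
        exact cubeFourierCoeff_sum _ (fun i _ => continuous_fderiv_fderiv_apply hg _ _) n
    _ = laplacianEigenvalue n • cubeFourierCoeff g n := by
        rw [← Finset.sum_smul, sum_phase_single_sq, Complex.coe_smul]

-- At `n = 0` the inverse is `0⁻¹ = 0`, so the right-hand side encodes the mean-zero condition.
theorem mean_eq_zero_and_piLaplacian_eq_iff {f u : (ι → ℝ) → F} (hf : Continuous f)
    (hfper : IsIntPeriodic f) (hfmean : ∫ x in unitCube ι, f x = 0) (hu : ContDiff ℝ 2 u)
    (huper : IsIntPeriodic u) :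
    (∫ x in unitCube ι, u x = 0 ∧ ∀ x, piLaplacian u x = f x) ↔
      ∀ n, cubeFourierCoeff u n = (laplacianEigenvalue n)⁻¹ • cubeFourierCoeff f n := by
  rw [← cubeFourierCoeff_zero] at hfmean ⊢
  constructor
  · rintro ⟨humean, hlap⟩ n
    obtain rfl | hn := eq_or_ne n 0
    · rw [humean, hfmean, smul_zero]
    · rw [← funext hlap, cubeFourierCoeff_piLaplacian hu huper,
        inv_smul_smul₀ (laplacianEigenvalue_ne_zero hn)]
  · intro hcoeff
    refine ⟨by rw [hcoeff, hfmean, smul_zero], congrFun ?_⟩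
    refine eq_of_cubeFourierCoeff_eq (continuous_piLaplacian hu) huper.isIntPeriodic_piLaplacian
      hf hfper fun n => ?_
    rw [cubeFourierCoeff_piLaplacian hu huper, hcoeff]
    obtain rfl | hn := eq_or_ne n 0
    · rw [hfmean, smul_zero, smul_zero]
    · rw [smul_inv_smul₀ (laplacianEigenvalue_ne_zero hn)]

theorem stmt12_general {f : (ι → ℝ) → F} (hf : ContDiff ℝ (⊤ : ℕ∞) f) (hper : IsIntPeriodic f)
    (hmean : ∫ x in unitCube ι, f x = 0) :
    ∃! u : (ι → ℝ) → F, ContDiff ℝ (⊤ : ℕ∞) u ∧ IsIntPeriodic u ∧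
      ∫ x in unitCube ι, u x = 0 ∧ ∀ x, piLaplacian u x = f x := by
  let a (n : ι → ℤ) : F := (laplacianEigenvalue n)⁻¹ • cubeFourierCoeff f n
  have summable_a (k : ℕ) : Summable fun n => ‖n‖ ^ k * ‖a n‖ :=
    summable_norm_pow_mul_norm_inv_laplacianEigenvalue_smul k (contDiff_infty.1 hf _) hper
  have smooth : ContDiff ℝ (⊤ : ℕ∞) (planeWaveSeries a) :=
    contDiff_planeWaveSeries fun k _ => summable_a k
  have coeff (n : ι → ℤ) : cubeFourierCoeff (planeWaveSeries a) n = a n :=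
    cubeFourierCoeff_planeWaveSeries (by simpa using summable_a 0) n
  have solves_iff {u : (ι → ℝ) → F} (hu : ContDiff ℝ (⊤ : ℕ∞) u) (huper : IsIntPeriodic u) :=
    mean_eq_zero_and_piLaplacian_eq_iff hf.continuous hper hmean (contDiff_infty.1 hu 2) huper
  have periodic := isIntPeriodic_planeWaveSeries a
  refine ⟨planeWaveSeries a, ⟨smooth, periodic, (solves_iff smooth periodic).2 coeff⟩, ?_⟩
  rintro v ⟨hv, hvper, hvsolves⟩
  exact eq_of_cubeFourierCoeff_eq hv.continuous hvper smooth.continuous periodic fun n =>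
    ((solves_iff hv hvper).1 hvsolves n).trans (coeff n).symm

end FintypeIndex

end

theorem stmt12 (d : ℕ) (hd : 1 ≤ d) (f : (Fin d → ℝ) → ℂ)
    (hf : ContDiff ℝ (⊤ : ℕ∞) f)
    (hper : ∀ (x : Fin d → ℝ) (k : Fin d → ℤ), f (x + fun i => (k i : ℝ)) = f x)
    (hmean : ∫ x in Set.univ.pi fun _ : Fin d => Set.Icc (0 : ℝ) 1, f x = 0) :
    ∃! u : (Fin d → ℝ) → ℂ,
      ContDiff ℝ (⊤ : ℕ∞) u ∧
      (∀ (x : Fin d → ℝ) (k : Fin d → ℤ), u (x + fun i => (k i : ℝ)) = u x) ∧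
      (∫ x in Set.univ.pi fun _ : Fin d => Set.Icc (0 : ℝ) 1, u x) = 0 ∧
      ∀ x : Fin d → ℝ,
        (∑ i : Fin d, fderiv ℝ (fun y => fderiv ℝ u y (Pi.single i 1)) x (Pi.single i 1))
          = f x :=
  stmt12_general hf hper hmean
end
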